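/- Let R be a henselian valuation ring of finite Krull dimension, and let φ : A → B be a homomorphism of finite R-algebras such that for every minimal prime q of B the prime φ⁻¹(q) is a minimal prime of A (so φ induces a homomorphism Q(A^red) → Q(B^red) of total rings of fractions). Let Q(A^red) → K and Q(B^red) → L be finite ring homomorphisms with K and L reduced, together with a ring homomorphism K → L making the square with Q(A^red) → Q(B^red) commute. Then for every pseudo-integral closure A^pic of A in K there exists a pseudo-integral closure B^pic of B in L such that the map K → L carries A^pic into B^pic. -/

import Mathlib

/-!
STATEMENT 8: Functoriality of pseudo-integral closures for morphisms of finite algebras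
over a henselian valuation ring of finite Krull dimension sending generic points to
generic points.
-/

open IsLocalRing in
/-- The induced map on residue fields at a prime `q ⊆ B` and its preimage `φ⁻¹(q) ⊆ A`. -/
noncomputable def residueFieldHom {A B : Type*} [CommRing A] [CommRing B] (φ : A →+* B)
    (q : Ideal B) [q.IsPrime] :
    ResidueField (Localization.AtPrime (q.comap φ)) →+* ResidueField (Localization.AtPrime q) :=
  letI := Localization.isLocalHom_localRingHom (q.comap φ) q φ rfl
  ResidueField.map (Localization.localRingHom (q.comap φ) q φ rfl)

/-- A pseudo-integral closure of `A` in `B`: an `A`-subalgebra `C` of the integral closure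
`B^ic` of `A` in `B` which is finitely generated as an `A`-module and such that
`Spec(B^ic) → Spec(C)` is a bijection inducing isomorphisms on all residue fields. -/
def IsPseudoIntegralClosure {A B : Type*} [CommRing A] [CommRing B] [Algebra A B]
    (C : Subalgebra A B) : Prop :=
  ∃ hle : C ≤ integralClosure A B,
    Module.Finite A C ∧
    Function.Bijective (PrimeSpectrum.comap (Subalgebra.inclusion hle).toRingHom) ∧
    ∀ (q : Ideal (integralClosure A B)) (_ : q.IsPrime),
      letI := ‹q.IsPrime›
      Function.Bijective (residueFieldHom (Subalgebra.inclusion hle).toRingHom q)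

/-- A field quasi-finite over `R` is finite over the residue field of a prime of `R`. -/
lemma Algebra.QuasiFinite.exists_algebra_residueField (R F : Type*) [CommRing R] [Field F]
    [Algebra R F] [Algebra.QuasiFinite R F] :
    ∃ (p : Ideal R) (_ : p.IsPrime) (_ : Algebra p.ResidueField F),
      IsScalarTower R p.ResidueField F ∧ Module.Finite p.ResidueField F := by
  have hp : (RingHom.ker (algebraMap R F)).IsPrime := RingHom.ker_isPrime _
  let f : (RingHom.ker (algebraMap R F)).ResidueField →ₐ[R] F :=
    Ideal.ResidueField.liftₐ _ (Algebra.ofId R F) le_rfl fun r hr ↦ IsUnit.mk0 _ hr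
  let := f.toRingHom.toAlgebra
  have : IsScalarTower R (RingHom.ker (algebraMap R F)).ResidueField F :=
    .of_algebraMap_eq' f.comp_algebraMap.symm
  have : Algebra.QuasiFinite (RingHom.ker (algebraMap R F)).ResidueField F :=
    .of_restrictScalars R _ _
  exact ⟨_, hp, _, ‹_›, .of_quasiFinite⟩

lemma ValuationRing.exists_forall_dvd {R ι : Type*} [CommRing R] [IsDomain R] [ValuationRing R]
    (g : ι → R) (s : Finset ι) (hs : s.Nonempty) : ∃ i ∈ s, ∀ j ∈ s, g i ∣ g j := by
  classical
  induction hs using Finset.Nonempty.cons_induction with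
  | singleton a => exact ⟨a, by simp⟩
  | cons a s ha hs ih =>
    obtain ⟨i, hi, h⟩ := ih
    obtain hd | hd := ValuationRing.dvd_total (g i) (g a)
    · exact ⟨i, by simp [hi], by simpa using ⟨hd, h⟩⟩
    · exact ⟨a, by simp, by simpa using fun j hj ↦ hd.trans (h j hj)⟩

open scoped TensorProduct in
/-- A subalgebra of a quasi-finite field over a valuation ring is quasi-finite. -/
lemma ValuationRing.quasiFinite_of_injective {R T F : Type*} [CommRing R] [IsDomain R]
    [ValuationRing R] [CommRing T] [Field F] [Algebra R T] [Algebra R F] [Algebra T F]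
    [IsScalarTower R T F] (hinj : Function.Injective (algebraMap T F))
    [Algebra.QuasiFinite R F] : Algebra.QuasiFinite R T := by
  refine ⟨fun P _ ↦ ?_⟩
  obtain ⟨b, hb, hspan, hli⟩ := exists_linearIndependent P.ResidueField
    (Set.range fun t : T ↦ (1 ⊗ₜ[R] t : P.Fiber T))
  have htop : Submodule.span P.ResidueField
      (Set.range fun t : T ↦ (1 ⊗ₜ[R] t : P.Fiber T)) = ⊤ := by
    rw [← top_le_iff]
    rintro z -
    induction z with
    | zero => exact zero_mem _
    | add x y hx hy => exact add_mem hx hy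
    | tmul x y =>
      have : (x ⊗ₜ[R] y : P.Fiber T) = x • (1 ⊗ₜ[R] y : P.Fiber T) := by
        simp [TensorProduct.smul_tmul']
      rw [this]
      exact Submodule.smul_mem _ _ (Submodule.subset_span ⟨y, rfl⟩)
  rw [htop] at hspan
  choose x hx using fun i : b ↦ hb i.2
  obtain ⟨p, _, _, _, _⟩ := Algebra.QuasiFinite.exists_algebra_residueField R F
  let : Algebra (R ⧸ p) F :=
    ((algebraMap p.ResidueField F).comp (algebraMap (R ⧸ p) p.ResidueField)).toAlgebra
  have : IsScalarTower (R ⧸ p) p.ResidueField F := .of_algebraMap_eq' rfl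
  have hind : LinearIndependent p.ResidueField fun i ↦ algebraMap T F (x i) := by
    rw [← LinearIndependent.iff_fractionRing (R ⧸ p), linearIndependent_iff']
    intro s g hg
    choose g' hg' using fun i ↦ Ideal.Quotient.mk_surjective (g i)
    have hsmul (r : R) (y : F) : Ideal.Quotient.mk p r • y = algebraMap R F r * y := by
      rw [Algebra.smul_def, IsScalarTower.algebraMap_apply R p.ResidueField F]
      rfl
    simp only [← hg', hsmul] at hg
    obtain rfl | hs := s.eq_empty_or_nonempty
    · simp
    obtain ⟨i, hi, hdvd⟩ := ValuationRing.exists_forall_dvd g' s hs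
    by_cases h0 : g' i ∈ p
    · intro j hj
      rw [← hg', Ideal.Quotient.eq_zero_iff_mem]
      exact p.mem_of_dvd (hdvd j hj) h0
    exfalso
    replace h0 : algebraMap R F (g' i) ≠ 0 := by
      rwa [IsScalarTower.algebraMap_apply R p.ResidueField F, map_ne_zero, ne_eq,
        Ideal.algebraMap_residueField_eq_zero]
    have hc (j) : ∃ c, (j ∈ s → g' j = g' i * c) ∧ (j = i → c = 1) := by
      by_cases hji : j = i
      · exact ⟨1, by simp [hji]⟩
      by_cases hj : j ∈ s
      · obtain ⟨c, hc⟩ := hdvd j hj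
        exact ⟨c, fun _ ↦ hc, fun h ↦ absurd h hji⟩
      · exact ⟨0, fun h ↦ absurd h hj, fun h ↦ absurd h hji⟩
    choose c hc hci using hc
    have hT : ∑ j ∈ s, c j • x j = 0 := by
      refine hinj ((mul_right_injective₀ h0) ?_)
      simp only [map_sum, map_zero, mul_zero]
      rw [← hg, Finset.mul_sum]
      refine Finset.sum_congr rfl fun j hj ↦ ?_
      rw [hc j hj, Algebra.smul_def, map_mul, map_mul, ← IsScalarTower.algebraMap_apply, mul_assoc]
    have hfib : ∑ j ∈ s, algebraMap R P.ResidueField (c j) • (j : P.Fiber T) = 0 := by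
      have := congrArg (fun t : T ↦ (1 ⊗ₜ[R] t : P.Fiber T)) hT
      simp only [TensorProduct.tmul_sum, TensorProduct.tmul_zero] at this
      rw [← this]
      refine Finset.sum_congr rfl fun j _ ↦ ?_
      rw [algebraMap_smul, TensorProduct.tmul_smul, ← hx j]
    simpa [hci i rfl] using linearIndependent_iff'.mp hli s _ hfib i hi
  have : Finite b := hind.finite
  exact Module.finite_def.mpr (hspan ▸ Submodule.fg_span (Set.toFinite b))

/-- A quasi-finite field extension is generated as a field by finitely many elements. -/
lemma Algebra.QuasiFinite.exists_finset_forall_subfield (R F : Type*) [CommRing R] [Field F]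
    [Algebra R F] [Algebra.QuasiFinite R F] :
    ∃ V : Finset F, ∀ E : Subfield F, (∀ r, algebraMap R F r ∈ E) → (∀ v ∈ V, v ∈ E) →
      E = ⊤ := by
  obtain ⟨p, _, _, _, _⟩ := Algebra.QuasiFinite.exists_algebra_residueField R F
  obtain ⟨V, hV⟩ := Module.Finite.fg_top
    (R := p.ResidueField) (M := F)
  refine ⟨V, fun E hR hE ↦ top_le_iff.mp fun z _ ↦ ?_⟩
  have hz : z ∈ Submodule.span p.ResidueField (V : Set F) :=
    hV ▸ Submodule.mem_top
  induction hz using Submodule.span_induction with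
  | mem z hz => exact hE z hz
  | zero => exact zero_mem _
  | add x y _ _ hx hy => exact add_mem (hx trivial) (hy trivial)
  | smul a x _ hx =>
    rw [Algebra.smul_def]
    refine mul_mem ?_ (hx trivial)
    obtain ⟨c, d, -, rfl⟩ :=
      IsFractionRing.div_surjective (A := R ⧸ p) a
    obtain ⟨c, rfl⟩ := Ideal.Quotient.mk_surjective c
    obtain ⟨d, rfl⟩ := Ideal.Quotient.mk_surjective d
    simp only [Ideal.algebraMap_quotient_residueField_mk, map_div₀,
      ← IsScalarTower.algebraMap_apply]
    exact div_mem (hR _) (hR _)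

lemma Ideal.ResidueField.exists_finset_forall_subfield (R : Type*) {S : Type*} [CommRing R]
    [CommRing S] [Algebra R S] (Q : Ideal S) [Q.IsPrime] [Algebra.QuasiFinite R Q.ResidueField] :
    ∃ V : Finset S, ∀ E : Subfield Q.ResidueField, (∀ r : R, algebraMap R Q.ResidueField r ∈ E) →
      (∀ v ∈ V, algebraMap S Q.ResidueField v ∈ E) → E = ⊤ := by
  classical
  obtain ⟨V, hV⟩ := Algebra.QuasiFinite.exists_finset_forall_subfield R Q.ResidueField
  have (z : Q.ResidueField) : ∃ c d : S,
      algebraMap S Q.ResidueField c / algebraMap S Q.ResidueField d = z := by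
    obtain ⟨c, d, -, rfl⟩ := IsFractionRing.div_surjective (A := S ⧸ Q) z
    obtain ⟨c, rfl⟩ := Ideal.Quotient.mk_surjective c
    obtain ⟨d, rfl⟩ := Ideal.Quotient.mk_surjective d
    exact ⟨c, d, rfl⟩
  choose c d hcd using this
  refine ⟨V.image c ∪ V.image d, fun E hR hE ↦ hV E hR fun v hv ↦ ?_⟩
  rw [← hcd v]
  exact div_mem (hE _ (by grind)) (hE _ (by grind))

lemma Ideal.exists_comap_le_of_injective {S L : Type*} [CommRing S] [CommRing L] {f : S →+* L}
    (hf : Function.Injective f) (Q : Ideal S) [Q.IsPrime] :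
    ∃ m : PrimeSpectrum L, m.asIdeal.comap f ≤ Q := by
  obtain ⟨q, hq, hqQ⟩ := Ideal.exists_minimalPrimes_le (I := ⊥) (J := Q) bot_le
  obtain ⟨m, hm, rfl⟩ := Ideal.exists_comap_eq_of_mem_minimalPrimes_of_injective hf q hq
  exact ⟨⟨m, hm⟩, hqQ⟩

lemma ValuationRing.quasiFinite_quotient_comap {R S L : Type*} [CommRing R] [IsDomain R]
    [ValuationRing R] [CommRing S] [CommRing L] [Algebra R S] [Algebra R L] [Algebra S L]
    [IsScalarTower R S L] [Algebra.QuasiFinite R L] (m : Ideal L) [m.IsPrime] :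
    Algebra.QuasiFinite R (S ⧸ m.comap (algebraMap S L)) := by
  let f : S ⧸ m.comap (algebraMap S L) →+* m.ResidueField :=
    (algebraMap (L ⧸ m) m.ResidueField).comp (Ideal.quotientMap m (algebraMap S L) le_rfl)
  let := f.toAlgebra
  have : IsScalarTower R (S ⧸ m.comap (algebraMap S L)) m.ResidueField := by
    refine .of_algebraMap_eq fun r ↦ ?_
    rw [IsScalarTower.algebraMap_apply R L m.ResidueField, IsScalarTower.algebraMap_apply R S L]
    rfl
  exact ValuationRing.quasiFinite_of_injective (F := m.ResidueField)
    (m.injective_algebraMap_quotient_residueField.comp Ideal.quotientMap_injective)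

lemma ValuationRing.finite_primeSpectrum {R : Type*} [CommRing R] [IsDomain R]
    [ValuationRing R] (hdim : ringKrullDim R < ⊤) : Finite (PrimeSpectrum R) := by
  by_contra hinf
  rw [not_finite_iff_infinite] at hinf
  refine hdim.ne (ENat.WithBot.eq_top_iff_forall_ge.mpr fun n ↦ ?_)
  classical
  let : LinearOrder (PrimeSpectrum R) :=
    { (inferInstance : PartialOrder (PrimeSpectrum R)) with
      le_total := fun p q ↦ Std.Total.total (r := (· ≤ ·)) p.asIdeal q.asIdeal
      toDecidableLE := Classical.decRel _ }
  obtain ⟨t, -, ht⟩ := Set.infinite_univ (α := PrimeSpectrum R) |>.exists_subset_card_eq (n + 1)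
  exact Order.LTSeries.length_le_krullDim (LTSeries.mk n _ (t.orderEmbOfFin ht).strictMono)

lemma ValuationRing.finite_primeSpectrum_of_injective {R S L : Type*} [CommRing R] [IsDomain R]
    [ValuationRing R] [CommRing S] [CommRing L] [Algebra R S] [Algebra R L] [Algebra S L]
    [IsScalarTower R S L] (hinj : Function.Injective (algebraMap S L))
    [Algebra.QuasiFinite R L] [Finite (PrimeSpectrum R)] : Finite (PrimeSpectrum S) := by
  have : Finite (PrimeSpectrum L) := Algebra.QuasiFinite.finite_primeSpectrum R _
  have (m : PrimeSpectrum L) : Finite (PrimeSpectrum (S ⧸ m.asIdeal.comap (algebraMap S L))) :=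
    have := ValuationRing.quasiFinite_quotient_comap (R := R) (S := S) m.asIdeal
    Algebra.QuasiFinite.finite_primeSpectrum R _
  refine Finite.of_surjective (α := Σ m : PrimeSpectrum L,
    PrimeSpectrum (S ⧸ m.asIdeal.comap (algebraMap S L)))
    (fun x ↦ PrimeSpectrum.comap (Ideal.Quotient.mk _) x.2) fun Q ↦ ?_
  obtain ⟨m, hm⟩ := Ideal.exists_comap_le_of_injective hinj Q.asIdeal
  have : Q ∈ Set.range (PrimeSpectrum.comap
      (Ideal.Quotient.mk (m.asIdeal.comap (algebraMap S L)))) := by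
    rw [range_comap_of_surjective _ _ Ideal.Quotient.mk_surjective]
    rw [Ideal.mk_ker]
    exact hm
  obtain ⟨x, hx⟩ := this
  exact ⟨⟨m, x⟩, hx⟩

lemma ValuationRing.quasiFinite_residueField {R S L : Type*} [CommRing R] [IsDomain R]
    [ValuationRing R] [CommRing S] [CommRing L] [Algebra R S] [Algebra R L] [Algebra S L]
    [IsScalarTower R S L] (hinj : Function.Injective (algebraMap S L))
    [Algebra.QuasiFinite R L] (Q : Ideal S) [Q.IsPrime] :
    Algebra.QuasiFinite R Q.ResidueField := by
  obtain ⟨m, hm⟩ := Ideal.exists_comap_le_of_injective hinj Q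
  have := ValuationRing.quasiFinite_quotient_comap (R := R) (S := S) m.asIdeal
  have : Algebra.QuasiFinite R (S ⧸ Q) :=
    .of_surjective_algHom (Ideal.Quotient.factorₐ R hm) (Ideal.Quotient.factor_surjective hm)
  exact .trans _ (S ⧸ Q) _

lemma residueFieldHom_algebraMap {A B : Type*} [CommRing A] [CommRing B] (φ : A →+* B)
    (q : Ideal B) [q.IsPrime] (a : A) :
    residueFieldHom φ q (algebraMap A (q.comap φ).ResidueField a) =
      algebraMap B q.ResidueField (φ a) :=
  Ideal.ResidueField.map_algebraMap _ _ _ rfl a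

/-- Every sufficiently large finite subalgebra of the integral closure is a pseudo-integral
closure. -/
lemma ValuationRing.exists_finset_isPseudoIntegralClosure (R B L : Type*) [CommRing R]
    [IsDomain R] [ValuationRing R] [Finite (PrimeSpectrum R)] [CommRing B] [CommRing L]
    [Algebra R B] [Algebra R L] [Algebra B L] [IsScalarTower R B L] [Algebra.QuasiFinite R L] :
    ∃ U : Finset (integralClosure B L), ∀ D : Subalgebra B L, D ≤ integralClosure B L →
      Module.Finite B D → (∀ u ∈ U, (u : L) ∈ D) → IsPseudoIntegralClosure D := by
  classical
  have hinj : Function.Injective (algebraMap (integralClosure B L) L) := Subtype.val_injective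
  have := ValuationRing.finite_primeSpectrum_of_injective (R := R) hinj
  have := Fintype.ofFinite (PrimeSpectrum (integralClosure B L))
  have hsep (x : PrimeSpectrum (integralClosure B L) × PrimeSpectrum (integralClosure B L)) :
      ∃ u, ¬ x.1.asIdeal ≤ x.2.asIdeal → u ∈ x.1.asIdeal ∧ u ∉ x.2.asIdeal := by
    by_cases hx : x.1.asIdeal ≤ x.2.asIdeal
    · exact ⟨0, fun h ↦ absurd hx h⟩
    · obtain ⟨u, hu⟩ := SetLike.not_le_iff_exists.mp hx
      exact ⟨u, fun _ ↦ hu⟩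
  choose u hu using hsep
  have hres (Q : PrimeSpectrum (integralClosure B L)) :=
    have := ValuationRing.quasiFinite_residueField (R := R) hinj Q.asIdeal
    Ideal.ResidueField.exists_finset_forall_subfield R Q.asIdeal
  choose V hV using hres
  refine ⟨Finset.univ.image u ∪ Finset.univ.biUnion V, fun D hD hfin hU ↦
    ⟨hD, hfin, ⟨fun P Q hPQ ↦ ?_, ?_⟩, fun Q hQ ↦ ⟨RingHom.injective _, ?_⟩⟩⟩
  · have hle (P Q : PrimeSpectrum (integralClosure B L))
        (h : PrimeSpectrum.comap (Subalgebra.inclusion hD).toRingHom P =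
          PrimeSpectrum.comap (Subalgebra.inclusion hD).toRingHom Q) : P ≤ Q := by
      change P.asIdeal ≤ Q.asIdeal
      by_contra hPQ
      obtain ⟨h1, h2⟩ := hu (P, Q) hPQ
      have huD : (u (P, Q) : L) ∈ D := hU _ (by simp)
      have h3 : (⟨_, huD⟩ : D) ∈
          (PrimeSpectrum.comap (Subalgebra.inclusion hD).toRingHom P).asIdeal := h1
      rw [h] at h3
      exact h2 h3
    exact le_antisymm (hle P Q hPQ) (hle Q P hPQ.symm)
  · let := (Subalgebra.inclusion hD).toRingHom.toAlgebra
    have : IsScalarTower B D (integralClosure B L) :=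
      .of_algebraMap_eq' (Subalgebra.inclusion hD).comp_algebraMap.symm
    have : Algebra.IsIntegral D (integralClosure B L) := .tower_top B
    have : FaithfulSMul D (integralClosure B L) :=
      (faithfulSMul_iff_algebraMap_injective _ _).mpr (Subalgebra.inclusion_injective hD)
    exact Algebra.IsIntegral.comap_surjective D (integralClosure B L)
  · have hrange (d : L) (hd : d ∈ D) :
        algebraMap (integralClosure B L) Q.ResidueField ⟨d, hD hd⟩ ∈
          (residueFieldHom (Subalgebra.inclusion hD).toRingHom Q).fieldRange :=
      RingHom.mem_fieldRange.mpr ⟨_, residueFieldHom_algebraMap _ Q (⟨d, hd⟩ : D)⟩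
    rw [← RingHom.fieldRange_eq_top_iff]
    refine hV ⟨Q, hQ⟩ _ (fun r ↦ ?_) fun v hv ↦ hrange v (hU v ?_)
    · rw [IsScalarTower.algebraMap_apply R (integralClosure B L) Q.ResidueField]
      refine hrange (algebraMap R L r) ?_
      rw [IsScalarTower.algebraMap_apply R B L]
      exact D.algebraMap_mem _
    · exact Finset.mem_union_right _ (Finset.mem_biUnion.mpr ⟨_, Finset.mem_univ _, hv⟩)

theorem exists_pseudoIntegralClosure_compatible
    {R A B K L : Type*} [CommRing R] [IsDomain R] [ValuationRing R] [HenselianLocalRing R]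
    (hdim : ringKrullDim R < ⊤)
    [CommRing A] [Algebra R A] [Module.Finite R A]
    [CommRing B] [Algebra R B] [Module.Finite R B]
    (φ : A →ₐ[R] B)
    (hmin : ∀ q ∈ minimalPrimes B, q.comap (φ : A →+* B) ∈ minimalPrimes A)
    [CommRing K] [IsReduced K] [CommRing L] [IsReduced L]
    (g : FractionRing (A ⧸ nilradical A) →+* K) (hg : g.Finite)
    (h : FractionRing (B ⧸ nilradical B) →+* L) (hh : h.Finite)
    (ψ : K →+* L)
    (hsq : ψ.comp ((g.comp (algebraMap (A ⧸ nilradical A)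
          (FractionRing (A ⧸ nilradical A)))).comp (Ideal.Quotient.mk (nilradical A))) =
        ((h.comp (algebraMap (B ⧸ nilradical B)
          (FractionRing (B ⧸ nilradical B)))).comp (Ideal.Quotient.mk (nilradical B))).comp
          (φ : A →+* B))
    [Algebra A K]
    (hcompA : algebraMap A K =
      (g.comp (algebraMap (A ⧸ nilradical A) (FractionRing (A ⧸ nilradical A)))).comp
        (Ideal.Quotient.mk (nilradical A)))
    [Algebra B L]
    (hcompB : algebraMap B L =
      (h.comp (algebraMap (B ⧸ nilradical B) (FractionRing (B ⧸ nilradical B)))).comp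
        (Ideal.Quotient.mk (nilradical B)))
    (C : Subalgebra A K) (hC : IsPseudoIntegralClosure C) :
    ∃ D : Subalgebra B L, IsPseudoIntegralClosure D ∧ ∀ x ∈ C, ψ x ∈ D := by
  classical
  have := ValuationRing.finite_primeSpectrum hdim
  let : Algebra R L := ((algebraMap B L).comp (algebraMap R B)).toAlgebra
  have : IsScalarTower R B L := .of_algebraMap_eq' rfl
  let := h.toAlgebra
  have : Module.Finite (FractionRing (B ⧸ nilradical B)) L := hh
  have : IsScalarTower R (FractionRing (B ⧸ nilradical B)) L := .of_algebraMap_eq' <| by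
    change (algebraMap B L).comp (algebraMap R B) = _
    rw [hcompB]
    rfl
  have : Algebra.QuasiFinite R L := .trans R (FractionRing (B ⧸ nilradical B)) L
  obtain ⟨U, hU⟩ := ValuationRing.exists_finset_isPseudoIntegralClosure R B L
  obtain ⟨hCle, hCfin, -⟩ := hC
  obtain ⟨t, ht⟩ := hCfin.fg_top
  have hcomm : ψ.comp (algebraMap A K) = (algebraMap B L).comp (φ : A →+* B) := by
    rw [hcompA, hcompB, hsq]
  have hint (x : K) (hx : x ∈ C) : IsIntegral B (ψ x) := by
    obtain ⟨f, hf, hfx⟩ := hCle hx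
    refine ⟨f.map (φ : A →+* B), hf.map _, ?_⟩
    rw [Polynomial.eval₂_map, ← hcomm, ← Polynomial.hom_eval₂, hfx, map_zero]
  let W : Finset L := U.image Subtype.val ∪ t.image (fun c : C ↦ ψ c)
  have hW : ∀ w ∈ W, IsIntegral B w := by
    intro w hw
    obtain hw | hw := Finset.mem_union.mp hw
    · obtain ⟨u, -, rfl⟩ := Finset.mem_image.mp hw
      exact u.2
    · obtain ⟨c, -, rfl⟩ := Finset.mem_image.mp hw
      exact hint c c.2
  have hWD (w : L) (hw : w ∈ W) : w ∈ Algebra.adjoin B (W : Set L) := Algebra.subset_adjoin hw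
  refine ⟨Algebra.adjoin B (W : Set L), hU _ (Algebra.adjoin_le hW)
    ?_ fun u hu ↦ hWD _ ?_, fun x hx ↦ ?_⟩
  · exact .of_fg (fg_adjoin_of_finite W.finite_toSet hW)
  · exact Finset.mem_union_left _ (Finset.mem_image_of_mem _ hu)
  · have hxt : (⟨x, hx⟩ : C) ∈ Submodule.span A (t : Set C) := ht ▸ Submodule.mem_top
    suffices ∀ c ∈ Submodule.span A (t : Set C), ψ (c : K) ∈ Algebra.adjoin B (W : Set L) from
      this _ hxt
    intro c hc
    induction hc using Submodule.span_induction with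
    | mem c hc => exact hWD _ (Finset.mem_union_right _ (Finset.mem_image_of_mem _ hc))
    | zero => simp
    | add c d _ _ hc hd => simpa using add_mem hc hd
    | smul a c _ hc =>
      have := RingHom.congr_fun hcomm a
      simp only [RingHom.comp_apply] at this
      simpa [Algebra.smul_def, this] using mul_mem (Subalgebra.algebraMap_mem _ _) hc
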